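/- Let T ⊆ List ℕ be a tree and T* = T⁺ ∪ { σ ++ [0] | σ ∈ T⁺ } where T⁺ = { σ.map (· + 1) | σ ∈ T }. Then a set K ⊆ List ℕ is the perfect kernel of T (the union of all perfect subtrees of T) if and only if K⁺ = { σ + 1 | σ ∈ K } is the perfect kernel of T*. -/

import Mathlib

/-- A tree is a set of finite sequences of naturals closed under initial segments. -/
def IsTree (T : Set (List ℕ)) : Prop :=
  ∀ σ ∈ T, ∀ τ : List ℕ, τ <+: σ → τ ∈ T

/-- Two sequences are incompatible if neither is a prefix of the other. -/
def Incomp (σ τ : List ℕ) : Prop :=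
  ¬ σ <+: τ ∧ ¬ τ <+: σ

/-- `S` is a perfect subtree of `T`: a subtree each of whose elements has
two incompatible extensions in `S`. -/
def IsPerfectSubtree (T S : Set (List ℕ)) : Prop :=
  IsTree S ∧ S ⊆ T ∧
    ∀ σ ∈ S, ∃ τ₁ ∈ S, ∃ τ₂ ∈ S, σ <+: τ₁ ∧ σ <+: τ₂ ∧ Incomp τ₁ τ₂

/-- The perfect kernel of `T`: the union of all perfect subtrees of `T`. -/
def PerfectKernel (T : Set (List ℕ)) : Set (List ℕ) :=
  {σ : List ℕ | ∃ S : Set (List ℕ), IsPerfectSubtree T S ∧ σ ∈ S}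

/-!
A perfect subtree contains no leaf of its ambient set, since a leaf has no two incompatible
extensions. The sequences `σ ++ [0]` with `σ ∈ T⁺` are leaves of `T*`, because `0` occurs in no
element of `T⁺`; hence `T*` and `T⁺` have the same perfect kernel. Finally `σ ↦ σ + 1` is injective
and preserves and reflects prefixes, so it carries the perfect kernel of `T` onto that of `T⁺`.
-/

/-- A leaf of `T`: an element of `T` without proper extensions in `T`. Adding or removing leaves
does not affect perfect subtrees. -/
def IsLeaf (T : Set (List ℕ)) (σ : List ℕ) : Prop :=
  σ ∈ T ∧ ∀ τ ∈ T, σ <+: τ → τ = σ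

section Leaves

variable {T L S : Set (List ℕ)} {σ : List ℕ}

theorem not_incomp_self (σ : List ℕ) : ¬ Incomp σ σ :=
  fun h => h.1 List.prefix_rfl

theorem IsPerfectSubtree.mono {T' : Set (List ℕ)} (hS : IsPerfectSubtree T S) (h : T ⊆ T') :
    IsPerfectSubtree T' S :=
  ⟨hS.1, hS.2.1.trans h, hS.2.2⟩

theorem IsPerfectSubtree.not_isLeaf (hS : IsPerfectSubtree T S) (hσ : σ ∈ S) : ¬ IsLeaf T σ := by
  rintro ⟨-, leaf⟩
  obtain ⟨-, hST, split⟩ := hS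
  obtain ⟨τ₁, hτ₁, τ₂, hτ₂, hστ₁, hστ₂, incomp⟩ := split σ hσ
  rw [leaf τ₁ (hST hτ₁) hστ₁, leaf τ₂ (hST hτ₂) hστ₂] at incomp
  exact not_incomp_self σ incomp

theorem isPerfectSubtree_union_iff_of_isLeaf (hL : ∀ σ ∈ L, IsLeaf (T ∪ L) σ) :
    IsPerfectSubtree (T ∪ L) S ↔ IsPerfectSubtree T S := by
  refine ⟨fun hS => ⟨hS.1, fun σ hσ => ?_, hS.2.2⟩, fun hS => hS.mono Set.subset_union_left⟩
  exact (hS.2.1 hσ).resolve_right fun hσL => hS.not_isLeaf hσ (hL σ hσL)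

theorem perfectKernel_union_of_isLeaf (hL : ∀ σ ∈ L, IsLeaf (T ∪ L) σ) :
    PerfectKernel (T ∪ L) = PerfectKernel T := by
  simp only [PerfectKernel, isPerfectSubtree_union_iff_of_isLeaf hL]

theorem isLeaf_append_singleton {a : ℕ} (ha : ∀ τ ∈ T, a ∉ τ) (hσ : σ ∈ T) :
    IsLeaf (T ∪ {l | ∃ σ ∈ T, l = σ ++ [a]}) (σ ++ [a]) := by
  refine ⟨.inr ⟨σ, hσ, rfl⟩, ?_⟩
  have not_prefix : ∀ τ ∈ T, ¬ σ ++ [a] <+: τ := fun τ hτ h => ha τ hτ (h.subset (by simp))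
  rintro τ (hτ | ⟨ρ, hρ, rfl⟩) hστ
  · exact absurd hστ (not_prefix τ hτ)
  · exact ((List.prefix_concat_iff.mp hστ).resolve_right (not_prefix ρ hρ)).symm

theorem perfectKernel_union_append_singleton {a : ℕ} (ha : ∀ τ ∈ T, a ∉ τ) :
    PerfectKernel (T ∪ {l | ∃ σ ∈ T, l = σ ++ [a]}) = PerfectKernel T := by
  refine perfectKernel_union_of_isLeaf ?_
  rintro _ ⟨σ, hσ, rfl⟩
  exact isLeaf_append_singleton ha hσ

end Leaves

section Relabelling

variable {T S : Set (List ℕ)} {f : ℕ → ℕ}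

theorem incomp_map_iff (hf : f.Injective) {σ τ : List ℕ} :
    Incomp (σ.map f) (τ.map f) ↔ Incomp σ τ := by
  simp only [Incomp, List.prefix_map_iff_of_injective hf]

theorem isTree_image_map_iff (hf : f.Injective) : IsTree (List.map f '' S) ↔ IsTree S := by
  constructor
  · intro hS σ hσ τ hτσ
    exact hf.list_map.mem_set_image.mp (hS _ (Set.mem_image_of_mem _ hσ) _ (hτσ.map f))
  · rintro hS _ ⟨σ, hσ, rfl⟩ τ hτσ
    obtain ⟨ρ, hρσ, rfl⟩ := List.prefix_map_iff.mp hτσ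
    exact Set.mem_image_of_mem _ (hS σ hσ ρ hρσ)

theorem isPerfectSubtree_image_map_iff (hf : f.Injective) :
    IsPerfectSubtree (List.map f '' T) (List.map f '' S) ↔ IsPerfectSubtree T S := by
  simp only [IsPerfectSubtree, isTree_image_map_iff hf, Set.image_subset_image_iff hf.list_map,
    Set.forall_mem_image, Set.exists_mem_image, List.prefix_map_iff_of_injective hf,
    incomp_map_iff hf]

theorem perfectKernel_image_map (hf : f.Injective) :
    PerfectKernel (List.map f '' T) = List.map f '' PerfectKernel T := by
  ext σ
  constructor
  · rintro ⟨S, hS, hσ⟩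
    obtain ⟨S, -, rfl⟩ := Set.subset_image_iff.mp hS.2.1
    obtain ⟨σ, hσS, rfl⟩ := hσ
    exact ⟨σ, ⟨S, (isPerfectSubtree_image_map_iff hf).mp hS, hσS⟩, rfl⟩
  · rintro ⟨σ, ⟨S, hS, hσ⟩, rfl⟩
    exact ⟨List.map f '' S, (isPerfectSubtree_image_map_iff hf).mpr hS, σ, hσ, rfl⟩

end Relabelling

theorem star_perfect_kernel_general (T K : Set (List ℕ)) {f : ℕ → ℕ} (hf : f.Injective) {a : ℕ}
    (ha : a ∉ Set.range f) :
    K = PerfectKernel T ↔ List.map f '' K =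
      PerfectKernel (List.map f '' T ∪ {l | ∃ σ ∈ List.map f '' T, l = σ ++ [a]}) := by
  have fresh : ∀ τ ∈ List.map f '' T, a ∉ τ := by
    rintro _ ⟨σ, -, rfl⟩ haσ
    obtain ⟨n, -, hn⟩ := List.mem_map.mp haσ
    exact ha ⟨n, hn⟩
  rw [perfectKernel_union_append_singleton fresh, perfectKernel_image_map hf]
  exact hf.list_map.image_injective.eq_iff.symm

theorem star_perfect_kernel (T Tp Ts : Set (List ℕ)) (hT : IsTree T)
    (hTp : Tp = (List.map (· + 1)) '' T)
    (hTs : Ts = Tp ∪ {l : List ℕ | ∃ σ ∈ Tp, l = σ ++ [0]}) :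
    ∀ K : Set (List ℕ),
      K = PerfectKernel T ↔ (List.map (· + 1)) '' K = PerfectKernel Ts := by
  subst hTp hTs
  exact fun K => star_perfect_kernel_general T K (add_left_injective 1) (by simp)
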